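/- Let D₁, D₂ > 0 and a ≥ 0. Define U(A_Hfd) as the supremum, over all pairs (μ₁, μ₂) of Borel probability measures on ℝ, each μ_i supported in some closed interval of length D_i, of (μ₁ ⊗ μ₂)({(x₁, x₂) : x₁ + x₂ ≥ a + m₁ + m₂}), where m_i := ∫ x dμ_i(x). Then U(A_Hfd) equals the optimal McDiarmid bound in dimension 2: U(A_Hfd) = 0 if D₁ + D₂ ≤ a; U(A_Hfd) = (D₁ + D₂ − a)²/(4 D₁ D₂) if |D₁ − D₂| ≤ a ≤ D₁ + D₂; and U(A_Hfd) = 1 − a/max(D₁, D₂) if 0 ≤ a ≤ |D₁ − D₂|. -/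

import Mathlib

/-!
Translate the supports to `[0, D₁]` and `[0, D₂]`, and let `m₁`, `m₂` be the means and
`t = a + m₁ + m₂`. Let `V` be the claimed optimum.

**Upper bound.** Conditionally on `X₁ = x`, Markov's inequality gives
`P(X₂ ≥ t - x) ≤ h(x)`, where `h(x) = 1` for `x ≥ a + m₁`, `h(x) = m₂ / (t - x)` for
`t - D₂ ≤ x < a + m₁` and `h(x) = 0` below. Any affine function above `h` on `[0, D₁]`,
evaluated at `m₁`, therefore bounds the probability (`prob_le_of_dominates`). The event is
null for `t > D₁ + D₂`; otherwise three lines suffice: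
* if `a + m₁ ≤ D₂`, the chord of `h` between `t - D₂` and `a + m₁`, with value `1 - a / D₂`;
* if `D₂ ≤ a + m₁ ≤ D₁`, the chord from the origin to `(a + m₁, 1)`, with value
  `m₁ / (a + m₁) ≤ 1 - a / D₁`;
* if `a + m₁ > D₁`, a line through the origin, with value
  `m₁ m₂ / min (D₂ (t - D₂)) (D₁ (t - D₁))`.

The first two, together with their images under exchanging the factors, leave only the case where
`a + m₁` and `a + m₂` both exceed `max D₁ D₂`. There `|D₁ - D₂| < a`, and the third value is at
most `(D₁ + D₂ - a)² / (4 D₁ D₂)` by `4 m₁ m₂ ≤ (t - a)²` and a quadratic inequality (`quad_le`).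
The bounds `1 - a / Dᵢ` are at most `V` in every regime.

**Lower bound.** Take `Xᵢ ∈ {0, Dᵢ}` with `P(Xᵢ = Dᵢ) = pᵢ`; as soon as
`a + p₁ D₁ + p₂ D₂ ≤ D₁ + D₂` the event contains `(D₁, D₂)`, of probability `p₁ p₂`. The choice
`pᵢ = (D₁ + D₂ - a) / (2 Dᵢ)` is optimal for `|D₁ - D₂| ≤ a ≤ D₁ + D₂`; for smaller `a` the
larger interval carries `p = 1 - a / max D₁ D₂` and the other variable is constant.
-/

open MeasureTheory
open scoped ENNReal

/-- The line `x ↦ α + β x` dominates on `[0, D₁]` the function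
equal to `1` for `x ≥ t - m₂`, to `m₂ / (t - x)` for `t - D₂ ≤ x < t - m₂` and to `0` for
`x < t - D₂`, where `t = a + m₁ + m₂`.
By Markov's inequality this function bounds the probability that `x + Y ≥ t` for
every `Y` with values in `[0, D₂]` and mean `m₂`. -/
def Dominates (D₁ D₂ a m₁ m₂ α β : ℝ) : Prop :=
  ∀ x, 0 ≤ x → x ≤ D₁ → 0 ≤ α + β * x ∧ (a + m₁ ≤ x → 1 ≤ α + β * x) ∧
    (a + m₁ + m₂ - D₂ ≤ x → x < a + m₁ → m₂ ≤ (α + β * x) * (a + m₁ + m₂ - x))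

/-! ### Measures on a bounded interval -/

lemma ae_mem_of_prob {μ : Measure ℝ} [IsProbabilityMeasure μ] {c D : ℝ}
    (h : μ (Set.Icc c (c + D)) = 1) : ∀ᵐ x ∂μ, x ∈ Set.Icc c (c + D) :=
  (mem_ae_iff_prob_eq_one measurableSet_Icc).2 h

lemma integrable_of_prob {μ : Measure ℝ} [IsProbabilityMeasure μ] {c D : ℝ}
    (h : μ (Set.Icc c (c + D)) = 1) : Integrable (fun x : ℝ => x) μ :=
  Integrable.of_mem_Icc c (c + D) aemeasurable_id (ae_mem_of_prob h)

lemma mean_mem {μ : Measure ℝ} [IsProbabilityMeasure μ] {c D : ℝ}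
    (h : μ (Set.Icc c (c + D)) = 1) :
    0 ≤ (∫ x, x ∂μ) - c ∧ (∫ x, x ∂μ) - c ≤ D := by
  have hi := integrable_of_prob h
  have h1 : ∫ _, c ∂μ ≤ ∫ x, x ∂μ :=
    integral_mono_ae (integrable_const _) hi ((ae_mem_of_prob h).mono fun x hx => hx.1)
  have h2 : ∫ x, x ∂μ ≤ ∫ _, (c + D) ∂μ :=
    integral_mono_ae hi (integrable_const _) ((ae_mem_of_prob h).mono fun x hx => hx.2)
  simp at h1 h2
  constructor <;> linarith

/-- Markov's inequality for the distance to the left endpoint. -/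
lemma markov {ν : Measure ℝ} [IsProbabilityMeasure ν] {c D s z : ℝ}
    (h : ν (Set.Icc c (c + D)) = 1) (hs : 0 < s)
    (hz : (∫ x, x ∂ν) - c ≤ z * s) : ν {y | c + s ≤ y} ≤ ENNReal.ofReal z := by
  have hi := integrable_of_prob h
  have h0 : 0 ≤ᵐ[ν] fun y : ℝ => y - c :=
    (ae_mem_of_prob h).mono fun x hx => sub_nonneg.2 hx.1
  have h1 := mul_meas_ge_le_integral_of_nonneg h0 (hi.sub (integrable_const c)) s
  rw [integral_sub hi (integrable_const c)] at h1
  simp only [integral_const, probReal_univ, one_smul] at h1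
  have h2 : {y : ℝ | c + s ≤ y} = {y | s ≤ y - c} := by
    ext y; simp only [Set.mem_ofPred_eq]; constructor <;> intro h <;> linarith
  rw [h2]
  refine (ENNReal.le_ofReal_iff_toReal_le (measure_ne_top _ _) ?_).2 ?_
  · have := (mean_mem h).1
    by_contra hneg
    push Not at hneg
    nlinarith
  · change s * (ν {y | s ≤ y - c}).toReal ≤ _ at h1
    have : s * (ν {y | s ≤ y - c}).toReal ≤ s * z := by linarith
    exact le_of_mul_le_mul_left this hs

lemma prob_le_of_dominates {μ ν : Measure ℝ} [IsProbabilityMeasure μ] [IsProbabilityMeasure ν]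
    {c₁ c₂ D₁ D₂ a α β : ℝ}
    (hμ : μ (Set.Icc c₁ (c₁ + D₁)) = 1) (hν : ν (Set.Icc c₂ (c₂ + D₂)) = 1)
    (hd : Dominates D₁ D₂ a ((∫ x, x ∂μ) - c₁) ((∫ x, x ∂ν) - c₂) α β) :
    (μ.prod ν) {p : ℝ × ℝ | a + (∫ x, x ∂μ) + (∫ x, x ∂ν) ≤ p.1 + p.2}
      ≤ ENNReal.ofReal (α + β * ((∫ x, x ∂μ) - c₁)) := by
  have hm : MeasurableSet {p : ℝ × ℝ | a + (∫ x, x ∂μ) + (∫ x, x ∂ν) ≤ p.1 + p.2} :=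
    measurableSet_le measurable_const (measurable_fst.add measurable_snd)
  have hi := integrable_of_prob hμ
  have hi1 : Integrable (fun x : ℝ => β * (x - c₁)) μ :=
    (hi.sub (integrable_const c₁)).const_mul β
  have hi2 : Integrable (fun x : ℝ => α + β * (x - c₁)) μ := (integrable_const α).add hi1
  have hint : ∫ x, (α + β * (x - c₁)) ∂μ = α + β * ((∫ x, x ∂μ) - c₁) := by
    rw [integral_add (integrable_const α) hi1,
      integral_const_mul, integral_sub hi (integrable_const c₁)]
    simp
  have hnn : 0 ≤ᵐ[μ] fun x : ℝ => α + β * (x - c₁) :=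
    (ae_mem_of_prob hμ).mono fun x hx =>
      (hd (x - c₁) (by linarith [hx.1]) (by linarith [hx.2])).1
  rw [Measure.prod_apply hm, ← hint, ofReal_integral_eq_lintegral_ofReal hi2 hnn]
  refine lintegral_mono_ae ((ae_mem_of_prob hμ).mono fun x hx => ?_)
  obtain ⟨-, h2, h3⟩ := hd (x - c₁) (by linarith [hx.1]) (by linarith [hx.2])
  have hset : (Prod.mk x ⁻¹' {p : ℝ × ℝ | a + (∫ x, x ∂μ) + (∫ x, x ∂ν) ≤ p.1 + p.2})
      = {y | c₂ + (a + ((∫ x, x ∂μ) - c₁) + ((∫ x, x ∂ν) - c₂) - (x - c₁)) ≤ y} := by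
    ext y
    simp only [Set.mem_preimage, Set.mem_ofPred_eq]
    constructor <;> intro h <;> linarith
  rw [hset]
  by_cases hA : a + ((∫ x, x ∂μ) - c₁) ≤ x - c₁
  · refine prob_le_one.trans ?_
    rw [← ENNReal.ofReal_one]
    exact ENNReal.ofReal_le_ofReal (h2 hA)
  push Not at hA
  have hm2 := mean_mem hν
  by_cases hB : a + ((∫ x, x ∂μ) - c₁) + ((∫ x, x ∂ν) - c₂) - D₂ ≤ x - c₁
  · exact markov hν (by linarith) (h3 hB hA)
  · push Not at hB
    have : ν {y | c₂ + (a + ((∫ x, x ∂μ) - c₁) + ((∫ x, x ∂ν) - c₂) - (x - c₁)) ≤ y} = 0 := by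
      refine measure_eq_zero_iff_ae_notMem.2 ((ae_mem_of_prob hν).mono fun y hy h => ?_)
      simp only [Set.mem_ofPred_eq] at h
      linarith [hy.2]
    rw [this]
    exact zero_le

/-- Symmetric form: the two factors may be exchanged. -/
lemma prob_le_of_dominates_swap {μ ν : Measure ℝ} [IsProbabilityMeasure μ]
    [IsProbabilityMeasure ν] {c₁ c₂ D₁ D₂ a α β : ℝ}
    (hμ : μ (Set.Icc c₁ (c₁ + D₁)) = 1) (hν : ν (Set.Icc c₂ (c₂ + D₂)) = 1)
    (hd : Dominates D₂ D₁ a ((∫ x, x ∂ν) - c₂) ((∫ x, x ∂μ) - c₁) α β) :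
    (μ.prod ν) {p : ℝ × ℝ | a + (∫ x, x ∂μ) + (∫ x, x ∂ν) ≤ p.1 + p.2}
      ≤ ENNReal.ofReal (α + β * ((∫ x, x ∂ν) - c₂)) := by
  have h := prob_le_of_dominates hν hμ hd
  have hm : MeasurableSet {p : ℝ × ℝ | a + (∫ x, x ∂μ) + (∫ x, x ∂ν) ≤ p.1 + p.2} :=
    measurableSet_le measurable_const (measurable_fst.add measurable_snd)
  rw [← Measure.prod_swap, Measure.map_apply measurable_swap hm]
  convert h using 2
  ext p
  simp only [Set.mem_preimage, Set.mem_ofPred_eq, Prod.fst_swap, Prod.snd_swap]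
  constructor <;> intro h <;> linarith

/-! ### Dominating lines -/

section Lines

variable {D₁ D₂ a m₁ m₂ V : ℝ}

/-- When the threshold exceeds `D₁ + D₂` the event is empty. -/
lemma line_zero (hm₂ : m₂ ≤ D₂) (h : D₁ + D₂ < a + m₁ + m₂) : Dominates D₁ D₂ a m₁ m₂ 0 0 := by
  intro x hx hx'
  refine ⟨by simp, fun h => by linarith, fun h => by linarith⟩

/-- The chord of the Markov bound between `x = t - D₂` and `x = a + m₁` has slope `1 / D₂`. -/
lemma line_chord (hD₂ : 0 < D₂) (h : a + m₁ ≤ D₂) :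
    Dominates D₁ D₂ a m₁ m₂ ((D₂ - a - m₁) / D₂) (1 / D₂) := by
  intro x hx hx'
  have e : (D₂ - a - m₁) / D₂ + 1 / D₂ * x = (x - a - m₁ + D₂) / D₂ := by
    field_simp; ring
  rw [e]
  refine ⟨div_nonneg (by linarith) hD₂.le, fun h => ?_, fun h1 h2 => ?_⟩
  · rw [le_div_iff₀ hD₂]; linarith
  · rw [div_mul_eq_mul_div, le_div_iff₀ hD₂]
    nlinarith [mul_nonneg (sub_nonneg.2 h2.le) (sub_nonneg.2 h1)]

/-- The chord from the origin to the point `(a + m₁, 1)`. -/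
lemma line_origin (hD₂ : 0 < D₂) (h : D₂ ≤ a + m₁) :
    Dominates D₁ D₂ a m₁ m₂ 0 (1 / (a + m₁)) := by
  have hp : 0 < a + m₁ := by linarith
  intro x hx hx'
  have e : 0 + 1 / (a + m₁) * x = x / (a + m₁) := by
    field_simp; ring
  rw [e]
  refine ⟨by positivity, fun h => ?_, fun h1 h2 => ?_⟩
  · rw [le_div_iff₀ hp]; linarith
  · rw [div_mul_eq_mul_div, le_div_iff₀ hp]
    have : 0 ≤ x - m₂ := by linarith
    nlinarith [mul_nonneg (sub_nonneg.2 h2.le) this]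

/-- A line `x ↦ m₂ x / K` through the origin: `x (t - x)` is concave, so on `[t - D₂, D₁]` it is
bounded below by its values `D₂ (t - D₂)` and `D₁ (t - D₁)` at the endpoints. -/
lemma line_corner {K : ℝ} (hm₂ : 0 ≤ m₂) (h : D₁ < a + m₁) (hK : 0 < K)
    (hK1 : K ≤ D₂ * (a + m₁ + m₂ - D₂)) (hK2 : K ≤ D₁ * (a + m₁ + m₂ - D₁)) :
    Dominates D₁ D₂ a m₁ m₂ 0 (m₂ / K) := by
  intro x hx hx'
  refine ⟨by positivity, fun h => by linarith, fun h1 _ => ?_⟩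
  have hx2 : K ≤ x * (a + m₁ + m₂ - x) := by
    rcases le_total x D₂ with h3 | h3
    · nlinarith [mul_nonneg (sub_nonneg.2 h1) (sub_nonneg.2 h3)]
    · rcases le_total (a + m₁ + m₂ - D₁) x with h4 | h4
      · nlinarith [mul_nonneg (sub_nonneg.2 h4) (sub_nonneg.2 hx')]
      · nlinarith [mul_nonneg (sub_nonneg.2 h1) (sub_nonneg.2 h3)]
  have e : (0 + m₂ / K * x) * (a + m₁ + m₂ - x) = m₂ * (x * (a + m₁ + m₂ - x)) / K := by
    field_simp; ring
  rw [e, le_div_iff₀ hK]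
  exact mul_le_mul_of_nonneg_left hx2 hm₂

/-- With `u = t - D₂` and `c = D₂ - a` one has `4 m₁ m₂ ≤ (u + c)²`, and the difference
`(D₁ + c)² u - (u + c)² D₁ = (D₁ - u) (D₁ u - c²)` is nonnegative since `|c| ≤ u ≤ D₁`. -/
lemma quad_le (hD₁ : 0 < D₁) (hm₁ : 0 ≤ m₁) (hm₂ : 0 ≤ m₂)
    (ht : a + m₁ + m₂ ≤ D₁ + D₂) (h₁ : D₂ < a + m₁) (h₂ : D₂ < a + m₂) :
    4 * D₁ * (m₁ * m₂) ≤ (D₁ + D₂ - a) ^ 2 * (a + m₁ + m₂ - D₂) := by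
  obtain ⟨u, hu⟩ : ∃ u, u = a + m₁ + m₂ - D₂ := ⟨_, rfl⟩
  obtain ⟨c, hc⟩ : ∃ c, c = D₂ - a := ⟨_, rfl⟩
  have hu0 : 0 ≤ u := by linarith
  have hcu : c ≤ u := by linarith
  have hcu' : -c ≤ u := by linarith
  have huD : u ≤ D₁ := by linarith
  have h1 : c ^ 2 ≤ D₁ * u := by
    have : c ^ 2 ≤ u ^ 2 := sq_le_sq' (by linarith) hcu
    nlinarith [mul_nonneg hu0 (sub_nonneg.2 huD)]
  have h2 : 4 * (m₁ * m₂) ≤ (u + c) ^ 2 := by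
    have : u + c = m₁ + m₂ := by linarith
    rw [this]; nlinarith [sq_nonneg (m₁ - m₂)]
  have h3 := mul_nonneg (sub_nonneg.2 huD) (sub_nonneg.2 h1)
  have h4 := mul_le_mul_of_nonneg_left h2 hD₁.le
  have e : D₁ + D₂ - a = D₁ + c := by linarith
  rw [e, ← hu]
  nlinarith

/-- In every configuration one of the lines has value at most `V`, for one of the two orders of
the factors. -/
lemma exists_line (hD₁ : 0 < D₁) (hD₂ : 0 < D₂) (hm₁ : 0 ≤ m₁) (hm₂ : 0 ≤ m₂)
    (hm₁' : m₁ ≤ D₁) (hm₂' : m₂ ≤ D₂) (hV : 0 ≤ V)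
    (hV₁ : 1 - a / D₁ ≤ V) (hV₂ : 1 - a / D₂ ≤ V)
    (hVq : |D₁ - D₂| ≤ a → a ≤ D₁ + D₂ → (D₁ + D₂ - a) ^ 2 / (4 * D₁ * D₂) ≤ V) :
    (∃ α β, Dominates D₁ D₂ a m₁ m₂ α β ∧ α + β * m₁ ≤ V) ∨
    (∃ α β, Dominates D₂ D₁ a m₂ m₁ α β ∧ α + β * m₂ ≤ V) := by
  rcases lt_or_ge (D₁ + D₂) (a + m₁ + m₂) with ht | ht
  · exact Or.inl ⟨0, 0, line_zero hm₂' ht, by simpa using hV⟩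
  rcases le_or_gt (a + m₁) D₂ with hA | hA
  · refine Or.inl ⟨_, _, line_chord hD₂ hA, le_trans (le_of_eq ?_) hV₂⟩
    field_simp; ring
  rcases le_or_gt (a + m₂) D₁ with hB | hB
  · refine Or.inr ⟨_, _, line_chord hD₁ hB, le_trans (le_of_eq ?_) hV₁⟩
    field_simp; ring
  rcases le_or_gt (a + m₁) D₁ with hC | hC
  · refine Or.inl ⟨_, _, line_origin hD₂ hA.le, le_trans ?_ hV₁⟩
    rw [zero_add, one_div_mul_eq_div, one_sub_div hD₁.ne', div_le_div_iff₀ (by linarith) hD₁]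
    by_cases ha : 0 ≤ a
    · nlinarith [mul_nonneg ha (sub_nonneg.2 hC)]
    · linarith
  rcases le_or_gt (a + m₂) D₂ with hE | hE
  · refine Or.inr ⟨_, _, line_origin hD₁ hB.le, le_trans ?_ hV₂⟩
    rw [zero_add, one_div_mul_eq_div, one_sub_div hD₂.ne', div_le_div_iff₀ (by linarith) hD₂]
    by_cases ha : 0 ≤ a
    · nlinarith [mul_nonneg ha (sub_nonneg.2 hE)]
    · linarith
  have hV' := hVq (abs_le.2 ⟨by linarith, by linarith⟩) (by linarith)
  rw [div_le_iff₀ (by positivity)] at hV'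
  have q1 := quad_le hD₁ hm₁ hm₂ ht hA hE
  have q2 := quad_le (D₁ := D₂) (D₂ := D₁) (a := a) hD₂ hm₂ hm₁ (by linarith) hB hC
  have hu : 0 < a + m₁ + m₂ - D₂ := by linarith
  have hv : 0 < a + m₁ + m₂ - D₁ := by linarith
  have hK : 0 < min (D₂ * (a + m₁ + m₂ - D₂)) (D₁ * (a + m₁ + m₂ - D₁)) :=
    lt_min (by positivity) (by positivity)
  refine Or.inl ⟨_, _, line_corner hm₂ hC hK (min_le_left _ _) (min_le_right _ _), ?_⟩
  rw [zero_add, div_mul_eq_mul_div, div_le_iff₀ hK, mul_min_of_nonneg _ _ hV]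
  refine le_min ?_ ?_
  · have := mul_le_mul_of_nonneg_right hV' hu.le
    have h4 : 0 < 4 * D₁ := by positivity
    refine le_of_mul_le_mul_left (a := 4 * D₁) ?_ h4
    linarith
  · have := mul_le_mul_of_nonneg_right hV' hv.le
    have h4 : 0 < 4 * D₂ := by positivity
    refine le_of_mul_le_mul_left (a := 4 * D₂) ?_ h4
    have e : D₂ + D₁ - a = D₁ + D₂ - a := by ring
    have e' : a + m₂ + m₁ - D₁ = a + m₁ + m₂ - D₁ := by ring
    rw [e, e'] at q2
    linarith

end Lines

/-! ### Extremal two-point measures -/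

/-- The law of a variable equal to `D` with probability `p` and to `0` with probability `1 - p`. -/
noncomputable def twoPoint (p D : ℝ) : Measure ℝ :=
  ENNReal.ofReal (1 - p) • Measure.dirac 0 + ENNReal.ofReal p • Measure.dirac D

lemma twoPoint_apply_of_mem {p D : ℝ} {s : Set ℝ} (hp : 0 ≤ p) (hp' : p ≤ 1) (h0 : (0 : ℝ) ∈ s)
    (hD : D ∈ s) : twoPoint p D s = 1 := by
  simp only [twoPoint, Measure.add_apply, Measure.smul_apply, Measure.dirac_apply_of_mem h0,
    Measure.dirac_apply_of_mem hD, smul_eq_mul, mul_one]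
  rw [← ENNReal.ofReal_add (by linarith) hp]
  simp

lemma isProbabilityMeasure_twoPoint {p D : ℝ} (hp : 0 ≤ p) (hp' : p ≤ 1) :
    IsProbabilityMeasure (twoPoint p D) :=
  ⟨twoPoint_apply_of_mem hp hp' trivial trivial⟩

lemma integral_twoPoint {p D : ℝ} (hp : 0 ≤ p) : ∫ x, x ∂(twoPoint p D) = p * D := by
  have h : ∀ (q x : ℝ), Integrable (fun y : ℝ => y) (ENNReal.ofReal q • Measure.dirac x) :=
    fun q x => (integrable_dirac (by simp)).smul_measure ENNReal.ofReal_ne_top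
  rw [twoPoint, integral_add_measure (h _ _) (h _ _), integral_smul_measure,
    integral_smul_measure]
  simp [ENNReal.toReal_ofReal hp]

lemma le_twoPoint_singleton (p D : ℝ) : ENNReal.ofReal p ≤ twoPoint p D {D} := by
  simp [twoPoint]

/-! ### The optimal bound -/

/-- The set of deviation probabilities over all admissible pairs of measures. -/
def devProbs (D₁ D₂ a : ℝ) : Set ℝ≥0∞ :=
  {v : ℝ≥0∞ | ∃ μ₁ μ₂ : Measure ℝ,
        IsProbabilityMeasure μ₁ ∧ IsProbabilityMeasure μ₂ ∧
        (∃ c : ℝ, μ₁ (Set.Icc c (c + D₁)) = 1) ∧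
        (∃ c : ℝ, μ₂ (Set.Icc c (c + D₂)) = 1) ∧
        v = (μ₁.prod μ₂) {p : ℝ × ℝ |
          a + (∫ x, x ∂μ₁) + (∫ x, x ∂μ₂) ≤ p.1 + p.2}}

lemma le_sSup_devProbs {D₁ D₂ a p₁ p₂ V : ℝ} (hD₁ : 0 < D₁) (hD₂ : 0 < D₂)
    (hp₁ : 0 ≤ p₁) (hp₁' : p₁ ≤ 1) (hp₂ : 0 ≤ p₂) (hp₂' : p₂ ≤ 1)
    (h : a + p₁ * D₁ + p₂ * D₂ ≤ D₁ + D₂) (hV : V = p₁ * p₂) :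
    ENNReal.ofReal V ≤ sSup (devProbs D₁ D₂ a) := by
  have i1 := isProbabilityMeasure_twoPoint (D := D₁) hp₁ hp₁'
  have i2 := isProbabilityMeasure_twoPoint (D := D₂) hp₂ hp₂'
  refine le_trans ?_ (le_sSup ⟨twoPoint p₁ D₁, twoPoint p₂ D₂, i1, i2,
    ⟨0, twoPoint_apply_of_mem hp₁ hp₁' (by simp [hD₁.le]) (by simp [hD₁.le])⟩,
    ⟨0, twoPoint_apply_of_mem hp₂ hp₂' (by simp [hD₂.le]) (by simp [hD₂.le])⟩, rfl⟩)
  rw [integral_twoPoint hp₁, integral_twoPoint hp₂, hV, ENNReal.ofReal_mul hp₁]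
  calc _ ≤ twoPoint p₁ D₁ {D₁} * twoPoint p₂ D₂ {D₂} :=
        mul_le_mul' (le_twoPoint_singleton _ _) (le_twoPoint_singleton _ _)
    _ = ((twoPoint p₁ D₁).prod (twoPoint p₂ D₂)) ({D₁} ×ˢ {D₂}) := (Measure.prod_prod _ _).symm
    _ ≤ _ := measure_mono (by
        rintro ⟨x, y⟩ ⟨hx, hy⟩
        simp only [Set.mem_singleton_iff] at hx hy
        simpa [hx, hy] using h)

lemma sSup_devProbs_le {D₁ D₂ a V : ℝ} (hD₁ : 0 < D₁) (hD₂ : 0 < D₂) (hV : 0 ≤ V)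
    (hV₁ : 1 - a / D₁ ≤ V) (hV₂ : 1 - a / D₂ ≤ V)
    (hVq : |D₁ - D₂| ≤ a → a ≤ D₁ + D₂ → (D₁ + D₂ - a) ^ 2 / (4 * D₁ * D₂) ≤ V) :
    sSup (devProbs D₁ D₂ a) ≤ ENNReal.ofReal V := by
  refine sSup_le ?_
  rintro v ⟨μ, ν, _, _, ⟨c₁, hμ⟩, ⟨c₂, hν⟩, rfl⟩
  have h1 := mean_mem hμ
  have h2 := mean_mem hν
  rcases exists_line hD₁ hD₂ h1.1 h2.1 h1.2 h2.2 hV hV₁ hV₂ hVq with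
    ⟨α, β, hd, hle⟩ | ⟨α, β, hd, hle⟩
  · exact (prob_le_of_dominates hμ hν hd).trans (ENNReal.ofReal_le_ofReal hle)
  · exact (prob_le_of_dominates_swap hμ hν hd).trans (ENNReal.ofReal_le_ofReal hle)

/-- The difference of the two sides is a positive multiple of `(D₁ - D₂ - a)²`. -/
lemma one_sub_div_le_quad {D₁ D₂ a : ℝ} (hD₁ : 0 < D₁) (hD₂ : 0 < D₂) :
    1 - a / D₁ ≤ (D₁ + D₂ - a) ^ 2 / (4 * D₁ * D₂) := by
  rw [one_sub_div hD₁.ne', div_le_div_iff₀ hD₁ (by positivity)]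
  nlinarith [mul_nonneg hD₁.le (sq_nonneg (D₁ - D₂ - a))]

/-- **Optimal Hoeffding inequality for `m = 2` coincides with the optimal McDiarmid
bound.** `U(A_Hfd)` is the supremum, over pairs `(μ₁, μ₂)` of Borel probability
measures on `ℝ` each supported in a closed interval of length `D_i`, of the
probability (under `μ₁ ⊗ μ₂`) that `x₁ + x₂ ≥ a + m₁ + m₂` where `m_i` is the mean
of `μ_i`; it is given by the explicit optimal two-dimensional McDiarmid formula. -/
theorem stmt13 (D₁ D₂ a : ℝ) (hD₁ : 0 < D₁) (hD₂ : 0 < D₂) (ha : 0 ≤ a) :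
    ∀ U : ℝ≥0∞,
      U = sSup {v : ℝ≥0∞ | ∃ μ₁ μ₂ : Measure ℝ,
        IsProbabilityMeasure μ₁ ∧ IsProbabilityMeasure μ₂ ∧
        (∃ c : ℝ, μ₁ (Set.Icc c (c + D₁)) = 1) ∧
        (∃ c : ℝ, μ₂ (Set.Icc c (c + D₂)) = 1) ∧
        v = (μ₁.prod μ₂) {p : ℝ × ℝ |
          a + (∫ x, x ∂μ₁) + (∫ x, x ∂μ₂) ≤ p.1 + p.2}} →
      (D₁ + D₂ ≤ a → U = 0) ∧
      (|D₁ - D₂| ≤ a → a ≤ D₁ + D₂ →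
        U = ENNReal.ofReal ((D₁ + D₂ - a) ^ 2 / (4 * D₁ * D₂))) ∧
      (a ≤ |D₁ - D₂| → U = ENNReal.ofReal (1 - a / max D₁ D₂)) := by
  intro U hU
  change U = sSup (devProbs D₁ D₂ a) at hU
  subst hU
  have neg_le : ∀ D, 0 < D → D ≤ a → 1 - a / D ≤ 0 := fun D hD h => by
    rw [one_sub_div hD.ne']
    exact div_nonpos_of_nonpos_of_nonneg (by linarith) hD.le
  refine ⟨fun h => ?_, fun h h' => le_antisymm ?_ ?_, fun h => le_antisymm ?_ ?_⟩
  · rw [← nonpos_iff_eq_zero, ← ENNReal.ofReal_zero]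
    refine sSup_devProbs_le hD₁ hD₂ le_rfl (neg_le _ hD₁ (by linarith))
      (neg_le _ hD₂ (by linarith)) fun _ h' => ?_
    have : D₁ + D₂ - a = 0 := by linarith
    simp [this]
  · refine sSup_devProbs_le hD₁ hD₂ (by positivity) (one_sub_div_le_quad hD₁ hD₂) ?_
      fun _ _ => le_rfl
    refine (one_sub_div_le_quad hD₂ hD₁).trans (le_of_eq ?_)
    ring
  · have h2 := abs_le.1 h
    have hn : 0 ≤ D₁ + D₂ - a := by linarith
    refine le_sSup_devProbs (p₁ := (D₁ + D₂ - a) / (2 * D₁)) (p₂ := (D₁ + D₂ - a) / (2 * D₂))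
      hD₁ hD₂ (by positivity) ?_ (by positivity) ?_ (le_of_eq ?_) ?_
    · rw [div_le_one (by positivity)]; linarith
    · rw [div_le_one (by positivity)]; linarith
    · field_simp; ring
    · field_simp; ring
  · have hM : 0 < max D₁ D₂ := lt_max_of_lt_left hD₁
    have haM : a ≤ max D₁ D₂ := by
      refine h.trans (abs_le.2 ⟨?_, ?_⟩)
      · linarith [le_max_right D₁ D₂]
      · linarith [le_max_left D₁ D₂]
    refine sSup_devProbs_le hD₁ hD₂ ?_ ?_ ?_ fun h1 _ => ?_
    · rw [one_sub_div hM.ne']; exact div_nonneg (by linarith) hM.le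
    · have := div_le_div_of_nonneg_left ha hD₁ (le_max_left D₁ D₂); linarith
    · have := div_le_div_of_nonneg_left ha hD₂ (le_max_right D₁ D₂); linarith
    · -- At the common endpoint `a = |D₁ - D₂|` the two formulas agree.
      have e : a = |D₁ - D₂| := le_antisymm h h1
      rcases le_total D₁ D₂ with hl | hl
      · rw [max_eq_right hl, e, abs_of_nonpos (by linarith)]
        apply le_of_eq; field_simp; ring
      · rw [max_eq_left hl, e, abs_of_nonneg (by linarith)]
        apply le_of_eq; field_simp; ring
  · rcases le_total D₁ D₂ with hl | hl
    · rw [abs_of_nonpos (by linarith)] at h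
      rw [max_eq_right hl]
      refine le_sSup_devProbs (p₁ := 1) (p₂ := 1 - a / D₂) hD₁ hD₂ zero_le_one le_rfl ?_ ?_
        (le_of_eq ?_) (by ring)
      · rw [one_sub_div hD₂.ne']; exact div_nonneg (by linarith) hD₂.le
      · have := div_nonneg ha hD₂.le; linarith
      · field_simp; ring
    · rw [abs_of_nonneg (by linarith)] at h
      rw [max_eq_left hl]
      refine le_sSup_devProbs (p₁ := 1 - a / D₁) (p₂ := 1) hD₁ hD₂ ?_ ?_ zero_le_one le_rfl
        (le_of_eq ?_) (by ring)
      · rw [one_sub_div hD₁.ne']; exact div_nonneg (by linarith) hD₁.le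
      · have := div_nonneg ha hD₁.le; linarith
      · field_simp; ring
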